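/- Let S be any of the four sign strings of length 12 that are cyclic rotations of (+,+,−,−,+,+,−,−,+,+,−,−). Then there is exactly one dominant state string J for S such that the web tensor of some (equivalently, any) complete execution of the growth algorithm from (S,J) fails the negative-exponent property relative to J; for every other dominant state string J for S, the web tensor has the negative-exponent property relative to J. -/

import Mathlib

/-!
The proof reduces the claim to a finite computation with integer exponents.

Every nonzero matrix entry of the maps attached to the H-, U- and Y-rules is a power of `v`, and the
entries do not depend on the signs (`down`). An execution becomes a sequence of positions and kinds
of rules acting on the zipped word of signs and states (`Run`, `exec_run`, `Run.exec`).

The web tensor does not depend on the execution (`Run.unique`). Rules at disjoint positions commute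
(`op_far`). Two rules that overlap in one letter can each be followed by one further rule so that the
resulting words agree (`red_overlap`), and the two composite linear maps agree by the relations among
webs (`op_crit`). This is a diamond property (`diamond`) that carries the linear maps along, and
induction on an execution gives uniqueness. It therefore suffices to examine one execution for each
dominant state string, and `script` produces one.

A coordinate of a web tensor is a sum of powers of `v` with known exponents (`ev_fl`). U- and Y-rules
never raise an exponent and an H-rule raises it by at most `1`, so all monomials with nonnegative
exponent are listed by `top`, which discards terms that are already too small (`fl_top`). A
coordinate whose exponents are all negative lies in `v⁻¹ℤ[v⁻¹]`; one in which the exponent `0` occurs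
exactly once and the others are negative does not, because `v⁻¹` is transcendental over `ℤ`.

The rotations of the base string repeat with period four. For each of the four strings, `dom` lists
the dominant state strings, and evaluation in the kernel confirms that all but one of them have the
negative-exponent property, while the remaining one (`jEven` or `jOdd`) has a second coordinate with
constant term `1` (`lEven` or `lOdd`).
-/

noncomputable section

/-- The ground field `K = ℚ(v)`. -/
abbrev K : Type := RatFunc ℚ

/-- The indeterminate `v`. -/
def v : K := RatFunc.X

/-- The three states `-1, 0, 1`. -/
inductive St where
  | neg : St
  | zero : St
  | pos : St
deriving DecidableEq

instance : Fintype St where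
  elems := {St.neg, St.zero, St.pos}
  complete := fun x => by cases x <;> simp

/-- The integer value of a state. -/
def stval : St → ℤ
  | .neg => -1
  | .zero => 0
  | .pos => 1

/-- The order `-1 < 0 < 1` on states. -/
def stLt (a b : St) : Prop := stval a < stval b

/-- The weight `μ(s, j) ∈ ℤ²`; `true` is the sign `+`, `false` is `-`. -/
def wt : Bool → St → ℤ × ℤ
  | true, .pos => (1, 0)
  | true, .zero => (-1, 1)
  | true, .neg => (0, -1)
  | false, .pos => (0, 1)
  | false, .zero => (1, -1)
  | false, .neg => (-1, 0)

/-- Total weight `Σ μ(s_k, j_k)` of a sign string and a state string. -/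
def wtSum (S : List Bool) (J : List St) : ℤ × ℤ :=
  ((S.zip J).map fun p => wt p.1 p.2).sum

/-- A state string is dominant if its lattice path stays in the dominant
Weyl chamber and returns to the origin. -/
def Dominant (S : List Bool) (J : List St) : Prop :=
  J.length = S.length ∧
  (∀ k : ℕ, 0 ≤ (wtSum (S.take k) (J.take k)).1 ∧ 0 ≤ (wtSum (S.take k) (J.take k)).2) ∧
  wtSum S J = 0

/-- Coefficients of `b^{+-}(1) ∈ V⁺ ⊗ V⁻`. -/
def bCpm : St → St → K
  | .pos, .neg => 1
  | .zero, .zero => v⁻¹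
  | .neg, .pos => v⁻¹ ^ 2
  | _, _ => 0

/-- Coefficients of `b^{-+}(1) ∈ V⁻ ⊗ V⁺`. -/
def bCmp : St → St → K
  | .pos, .neg => 1
  | .zero, .zero => v⁻¹
  | .neg, .pos => v⁻¹ ^ 2
  | _, _ => 0

/-- Matrix entries of `σ_{+-} : V⁺ ⊗ V⁻ → K`. -/
def sCpm : St → St → K
  | .neg, .pos => 1
  | .zero, .zero => v
  | .pos, .neg => v ^ 2
  | _, _ => 0

/-- Matrix entries of `σ_{-+} : V⁻ ⊗ V⁺ → K`. -/
def sCmp : St → St → K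
  | .neg, .pos => 1
  | .zero, .zero => v
  | .pos, .neg => v ^ 2
  | _, _ => 0

/-- `tYpp a b c` is the coefficient of `e_a ⊗ e_b` in `t^{++}_-(e_c)`. -/
def tYpp : St → St → St → K
  | .pos, .zero, .pos => 1
  | .zero, .pos, .pos => v⁻¹
  | .pos, .neg, .zero => 1
  | .neg, .pos, .zero => v⁻¹
  | .zero, .neg, .neg => 1
  | .neg, .zero, .neg => v⁻¹
  | _, _, _ => 0

/-- `tYmm a b c` is the coefficient of `e_a ⊗ e_b` in `t^{--}_+(e_c)`. -/
def tYmm : St → St → St → K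
  | .pos, .zero, .pos => 1
  | .zero, .pos, .pos => v⁻¹
  | .pos, .neg, .zero => 1
  | .neg, .pos, .zero => v⁻¹
  | .zero, .neg, .neg => 1
  | .neg, .zero, .neg => v⁻¹
  | _, _, _ => 0

/-- `tLpp a b c` is the coefficient of `e_c` in `t^-_{++}(e_a ⊗ e_b)`. -/
def tLpp : St → St → St → K
  | .pos, .zero, .pos => v
  | .zero, .pos, .pos => 1
  | .pos, .neg, .zero => v
  | .neg, .pos, .zero => 1
  | .zero, .neg, .neg => v
  | .neg, .zero, .neg => 1
  | _, _, _ => 0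

/-- `tLmm a b c` is the coefficient of `e_c` in `t^+_{--}(e_a ⊗ e_b)`. -/
def tLmm : St → St → St → K
  | .pos, .zero, .pos => v
  | .zero, .pos, .pos => 1
  | .pos, .neg, .zero => v
  | .neg, .pos, .zero => 1
  | .zero, .neg, .neg => v
  | .neg, .zero, .neg => 1
  | _, _, _ => 0

/-- Matrix entries of the H-map
`(id_{V⁺} ⊗ t^-_{++}) ∘ (t^{++}_- ⊗ id_{V⁺}) : V⁻ ⊗ V⁺ → V⁺ ⊗ V⁻`:
`HCpm a b c d` is the coefficient of `e_a ⊗ e_b` in the image of `e_c ⊗ e_d`. -/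
def HCpm (a b c d : St) : K := ∑ y : St, tYpp a y c * tLpp y d b

/-- Matrix entries of the H-map
`(t^-_{++} ⊗ id_{V⁺}) ∘ (id_{V⁺} ⊗ t^{++}_-) : V⁺ ⊗ V⁻ → V⁻ ⊗ V⁺`:
`HCmp a b c d` is the coefficient of `e_a ⊗ e_b` in the image of `e_c ⊗ e_d`. -/
def HCmp (a b c d : St) : K := ∑ x : St, tLpp c x a * tYpp x b d

/-- State patterns of the three H-rules: `(j_k, j_{k+1})` on top, the
replacement below. -/
inductive HPat : St → St → St → St → Prop where
  | h1 : HPat .pos .zero .zero .pos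
  | h2 : HPat .zero .zero .neg .pos
  | h3 : HPat .zero .neg .neg .zero

/-- State patterns of the three Y-rules. -/
inductive YPat : St → St → St → Prop where
  | y1 : YPat .pos .zero .pos
  | y2 : YPat .pos .neg .zero
  | y3 : YPat .zero .neg .neg

/-- One application of a growth rule, rewriting `(S, J)` to `(S', J')`. -/
inductive Step : List Bool → List St → List Bool → List St → Prop where
  | hstep (A B : List Bool) (P Q : List St) (s1 s2 : Bool) (j1 j2 j1' j2' : St)
      (hl : A.length = P.length) (hs : s1 ≠ s2) (hp : HPat j1 j2 j1' j2') :
      Step (A ++ s1 :: s2 :: B) (P ++ j1 :: j2 :: Q)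
        (A ++ (!s1) :: (!s2) :: B) (P ++ j1' :: j2' :: Q)
  | ustep (A B : List Bool) (P Q : List St) (s1 s2 : Bool)
      (hl : A.length = P.length) (hs : s1 ≠ s2) :
      Step (A ++ s1 :: s2 :: B) (P ++ St.pos :: St.neg :: Q) (A ++ B) (P ++ Q)
  | ystep (A B : List Bool) (P Q : List St) (s : Bool) (j1 j2 j' : St)
      (hl : A.length = P.length) (hp : YPat j1 j2 j') :
      Step (A ++ s :: s :: B) (P ++ j1 :: j2 :: Q) (A ++ (!s) :: B) (P ++ j' :: Q)

/-- A complete execution of the growth algorithm from `(S, J)` down to the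
pair of empty strings. -/
inductive Exec : List Bool → List St → Type where
  | nil : Exec [] []
  | hstep (A B : List Bool) (P Q : List St) (s1 s2 : Bool) (j1 j2 j1' j2' : St)
      (hl : A.length = P.length) (hs : s1 ≠ s2) (hp : HPat j1 j2 j1' j2')
      (e : Exec (A ++ (!s1) :: (!s2) :: B) (P ++ j1' :: j2' :: Q)) :
      Exec (A ++ s1 :: s2 :: B) (P ++ j1 :: j2 :: Q)
  | ustep (A B : List Bool) (P Q : List St) (s1 s2 : Bool)
      (hl : A.length = P.length) (hs : s1 ≠ s2)
      (e : Exec (A ++ B) (P ++ Q)) :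
      Exec (A ++ s1 :: s2 :: B) (P ++ St.pos :: St.neg :: Q)
  | ystep (A B : List Bool) (P Q : List St) (s : Bool) (j1 j2 j' : St)
      (hl : A.length = P.length) (hp : YPat j1 j2 j')
      (e : Exec (A ++ (!s) :: B) (P ++ j' :: Q)) :
      Exec (A ++ s :: s :: B) (P ++ j1 :: j2 :: Q)

/-- The web tensor of an execution, as coordinates with respect to the basis
`e^S_J` of `V^S`: `web e L` is the coefficient of `e^S_L`. -/
def web : {S : List Bool} → {J : List St} → Exec S J → List St → K
  | _, _, .nil, L => if L = [] then 1 else 0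
  | _, _, .hstep A _ _ _ s1 _ _ _ _ _ _ _ _ e, L =>
      match L.drop A.length with
      | a :: b :: R =>
          ∑ c : St, ∑ d : St,
            (if s1 then HCpm a b c d else HCmp a b c d) *
              web e (L.take A.length ++ c :: d :: R)
      | _ => 0
  | _, _, .ustep A _ _ _ s1 _ _ _ e, L =>
      match L.drop A.length with
      | a :: b :: R => (if s1 then bCpm a b else bCmp a b) * web e (L.take A.length ++ R)
      | _ => 0
  | _, _, .ystep A _ _ _ s _ _ _ _ _ e, L =>
      match L.drop A.length with
      | a :: b :: R =>
          ∑ c : St, (if s then tYpp a b c else tYmm a b c) * web e (L.take A.length ++ c :: R)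
      | _ => 0

/-- `c ∈ v⁻¹ ℤ[v⁻¹]`: a polynomial in `v⁻¹` with zero constant term. -/
def ZeroConst (c : K) : Prop :=
  ∃ p : Polynomial ℤ, p.coeff 0 = 0 ∧ c = Polynomial.aeval v⁻¹ p

/-- `x` has the negative-exponent property relative to a state string `J`
(`n` is the length of the ambient sign string). -/
def NegExpProp (n : ℕ) (x : List St → K) (J : List St) : Prop :=
  x J = 1 ∧ ∀ J' : List St, J'.length = n → J' ≠ J → ZeroConst (x J')

/-- `c ∈ ℕ[v, v⁻¹]`: a Laurent polynomial with nonnegative integer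
coefficients. -/
def IsNatLaurent (c : K) : Prop :=
  ∃ (p : Polynomial ℕ) (m : ℕ), c = v⁻¹ ^ m * Polynomial.aeval v p

/-- `c ∈ ℤ[v⁻¹]`. -/
def InZInv (c : K) : Prop := ∃ p : Polynomial ℤ, c = Polynomial.aeval v⁻¹ p

/-- Property P: all coefficients lie in `ℤ[v⁻¹]` and at most one of them has a
nonzero constant term. -/
def PropP (n : ℕ) (x : List St → K) : Prop :=
  (∀ J : List St, J.length = n → InZInv (x J)) ∧
  ∀ J1 J2 : List St, J1.length = n → J2.length = n →
    ¬ ZeroConst (x J1) → ¬ ZeroConst (x J2) → J1 = J2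

/-- The sign string `(+,+,−,−,+,+,−,−,+,+,−,−)`. -/
def base : List Bool :=
  [true, true, false, false, true, true, false, false, true, true, false, false]

/-! ### Local rules -/

/-- The three kinds of growth rules. -/
inductive Kind where
  | H : Kind
  | U : Kind
  | Y : Kind
deriving DecidableEq

instance : Fintype Kind where
  elems := {Kind.H, Kind.U, Kind.Y}
  complete := fun x => by cases x <;> simp

/-- The growth rule that applies to two adjacent letters (a letter is a sign with a state), if any:
its kind and the letters that replace the two. -/
def red : Bool × St → Bool × St → Option (Kind × List (Bool × St))
  | (s, a), (t, b) =>
    match s, t, a, b with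
    | true, false, .pos, .neg => some (.U, [])
    | false, true, .pos, .neg => some (.U, [])
    | true, false, .pos, .zero => some (.H, [(false, .zero), (true, .pos)])
    | true, false, .zero, .zero => some (.H, [(false, .neg), (true, .pos)])
    | true, false, .zero, .neg => some (.H, [(false, .neg), (true, .zero)])
    | false, true, .pos, .zero => some (.H, [(true, .zero), (false, .pos)])
    | false, true, .zero, .zero => some (.H, [(true, .neg), (false, .pos)])
    | false, true, .zero, .neg => some (.H, [(true, .neg), (false, .zero)])
    | true, true, .pos, .zero => some (.Y, [(false, .pos)])
    | true, true, .pos, .neg => some (.Y, [(false, .zero)])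
    | true, true, .zero, .neg => some (.Y, [(false, .neg)])
    | false, false, .pos, .zero => some (.Y, [(true, .pos)])
    | false, false, .pos, .neg => some (.Y, [(true, .zero)])
    | false, false, .zero, .neg => some (.Y, [(true, .neg)])
    | _, _, _, _ => none

/-- The growth rule at position `k` (counted from `0`) of a word of letters, if one applies: its kind
and the rewritten word. -/
def redAt : ℕ → List (Bool × St) → Option (Kind × List (Bool × St))
  | 0, x :: y :: B => (red x y).map fun p => (p.1, p.2 ++ B)
  | k + 1, x :: W => (redAt k W).map fun p => (p.1, x :: p.2)
  | _, _ => none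

/-- The matrix of the map attached to a rule, read by rows: `(δ, M) ∈ down κ a b` says that
`e_a ⊗ e_b` occurs in the image of `e_M` with coefficient `v ^ δ`. All nonzero entries are
monomials, and they do not depend on the signs. -/
def down : Kind → St → St → List (ℤ × List St)
  | .H, .pos, .pos => [(0, [.pos, .pos])]
  | .H, .pos, .zero => [(0, [.zero, .pos])]
  | .H, .pos, .neg => [(1, [.pos, .neg]), (0, [.zero, .zero])]
  | .H, .zero, .pos => [(0, [.pos, .zero])]
  | .H, .zero, .zero => [(0, [.pos, .neg]), (0, [.neg, .pos])]
  | .H, .zero, .neg => [(0, [.neg, .zero])]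
  | .H, .neg, .pos => [(0, [.zero, .zero]), (-1, [.neg, .pos])]
  | .H, .neg, .zero => [(0, [.zero, .neg])]
  | .H, .neg, .neg => [(0, [.neg, .neg])]
  | .U, .pos, .neg => [(0, [])]
  | .U, .zero, .zero => [(-1, [])]
  | .U, .neg, .pos => [(-2, [])]
  | .U, _, _ => []
  | .Y, .pos, .zero => [(0, [.pos])]
  | .Y, .zero, .pos => [(-1, [.pos])]
  | .Y, .pos, .neg => [(0, [.zero])]
  | .Y, .neg, .pos => [(-1, [.zero])]
  | .Y, .zero, .neg => [(0, [.neg])]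
  | .Y, .neg, .zero => [(-1, [.neg])]
  | .Y, _, _ => []

/-- The number of strands below a vertex of the given kind. -/
def width : Kind → ℕ
  | .H => 2
  | .U => 0
  | .Y => 1

/-- The map attached to a rule, acting on positions `k, k + 1` of a tensor given by its
coordinates. -/
def op (κ : Kind) : ℕ → (List St → K) → List St → K
  | 0, f, a :: b :: R => ((down κ a b).map fun t => v ^ t.1 * f (t.2 ++ R)).sum
  | k + 1, f, x :: L => op κ k (fun T => f (x :: T)) L
  | _, _, _ => 0

/-- The coordinate function of `1 ∈ K = V^∅`. -/
def unitTensor (L : List St) : K := if L = [] then 1 else 0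

/-- `Run W f`: some complete sequence of growth rules takes the word `W` to the empty word, and its
web tensor has coordinates `f`. -/
inductive Run : List (Bool × St) → (List St → K) → Prop where
  | nil : Run [] unitTensor
  | step (k : ℕ) (κ : Kind) (W X : List (Bool × St)) (f : List St → K)
      (h : redAt k W = some (κ, X)) (r : Run X f) : Run W (op κ k f)

lemma v_ne_zero : v ≠ 0 := RatFunc.X_ne_zero

/-! ### Independence of the execution -/

lemma op_zero_fun (κ : Kind) (k : ℕ) (L : List St) : op κ k (fun _ => 0) L = 0 := by
  induction k generalizing L with
  | zero => rcases L with _ | ⟨a, _ | ⟨b, R⟩⟩ <;> simp [op]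
  | succ k ih => rcases L with _ | ⟨a, R⟩ <;> simp [op, ih]

lemma op_lin (κ : Kind) (k : ℕ) (c : K) (f g : List St → K) (L : List St) :
    op κ k (fun T => c * f T + g T) L = c * op κ k f L + op κ k g L := by
  induction k generalizing L f g with
  | zero =>
    rcases L with _ | ⟨a, _ | ⟨b, R⟩⟩ <;> simp only [op, mul_zero, add_zero]
    rw [← List.sum_map_mul_left, ← List.sum_map_add]
    congr 1
    refine List.map_congr_left fun t _ => ?_
    ring
  | succ k ih =>
    rcases L with _ | ⟨a, R⟩
    · simp [op]
    · simp only [op, ih]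

lemma op_sum {ι : Type} (κ : Kind) (k : ℕ) (l : List ι) (c : ι → K) (f : ι → List St → K)
    (L : List St) :
    op κ k (fun T => (l.map fun t => c t * f t T).sum) L
      = (l.map fun t => c t * op κ k (f t) L).sum := by
  induction l with
  | nil => simpa using op_zero_fun κ k L
  | cons t l ih => simp only [List.map_cons, List.sum_cons, op_lin, ih]

lemma op_append (κ : Kind) (k : ℕ) (f : List St → K) (M R : List St) :
    op κ (k + M.length) f (M ++ R) = op κ k (fun T => f (M ++ T)) R := by
  induction M generalizing f with
  | nil => rfl
  | cons m M ih => exact ih _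

lemma down_length (κ : Kind) (a b : St) : ∀ t ∈ down κ a b, t.2.length = width κ := by
  revert κ a b; decide

lemma red_length (x y : Bool × St) : ∀ p ∈ red x y, p.2.length = width p.1 := by
  revert x y; decide

/-- Maps at disjoint positions commute. -/
lemma op_far (κ₁ κ₂ : Kind) (j : ℕ) (f : List St → K) :
    op κ₁ 0 (op κ₂ (j + width κ₁) f) = op κ₂ (j + 2) (op κ₁ 0 f) := by
  funext L
  rcases L with _ | ⟨a, _ | ⟨b, R⟩⟩
  · rfl
  · rfl
  · simp only [op]
    rw [op_sum κ₂ j (down κ₁ a b) (fun t => v ^ t.1) (fun t T => f (t.2 ++ T)) R]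
    congr 1
    refine List.map_congr_left fun t ht => ?_
    rw [← down_length κ₁ a b t ht, op_append]

/-- The critical pairs: `(κ₁, κ₁', n, κ₂, κ₂')` stands for the resolution in which `κ₁` at position `0`
followed by `κ₁'` at position `n` equals `κ₂` at position `1` followed by `κ₂'` at position `0`. -/
def crit : List (Kind × Kind × ℕ × Kind × Kind) :=
  [(.H, .Y, 1, .H, .Y), (.Y, .Y, 0, .H, .U), (.H, .U, 1, .Y, .Y), (.Y, .U, 0, .Y, .U)]

/-- Two growth rules on overlapping pairs of letters always resolve in one further step each. -/
lemma red_overlap (x y z : Bool × St) (p q : Kind × List (Bool × St)) (hp : red x y = some p)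
    (hq : red y z = some q) :
      ∃ p' ∈ redAt (p.2.length - 1) (p.2 ++ [z]), ∃ q' ∈ redAt 0 (x :: q.2),
        p'.2 = q'.2 ∧ (p.1, p'.1, p.2.length - 1, q.1, q'.1) ∈ crit := by
  obtain ⟨s, a⟩ := x
  obtain ⟨t, b⟩ := y
  obtain ⟨u, c⟩ := z
  cases s <;> cases t <;> cases a <;> cases b <;>
    simp only [red, Option.some.injEq, reduceCtorEq] at hp <;>
    cases u <;> cases c <;>
    simp only [red, Option.some.injEq, reduceCtorEq] at hq <;>
    subst hp hq <;>
    exact ⟨_, rfl, _, rfl, rfl, by decide⟩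

/-- The web relations behind the critical pairs. -/
lemma op_crit {κ₁ κ₁' κ₂ κ₂' : Kind} {n : ℕ} (h : (κ₁, κ₁', n, κ₂, κ₂') ∈ crit)
    (f : List St → K) : op κ₁ 0 (op κ₁' n f) = op κ₂ 1 (op κ₂' 0 f) := by
  have h1 : v * v⁻¹ = 1 := mul_inv_cancel₀ v_ne_zero
  have h2 : ∀ x : K, v * (v⁻¹ * x) = x := fun x => by rw [← mul_assoc, h1, one_mul]
  have h3 : v ^ (-2 : ℤ) = v⁻¹ * v⁻¹ := by
    rw [show (-2 : ℤ) = -1 + -1 by norm_num, zpow_add₀ v_ne_zero, zpow_neg_one]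
  funext L
  simp only [crit, List.mem_cons, Prod.mk.injEq, List.not_mem_nil, or_false] at h
  rcases L with _ | ⟨a, _ | ⟨b, _ | ⟨c, R⟩⟩⟩
  · rfl
  · rfl
  · rcases h with h | h | h | h <;> obtain ⟨rfl, rfl, rfl, rfl, rfl⟩ := h <;>
      cases a <;> cases b <;>
      simp only [op, down, List.map_cons, List.map_nil, List.sum_cons, List.sum_nil,
        List.cons_append, List.nil_append, mul_zero, add_zero]
  · rcases h with h | h | h | h <;> obtain ⟨rfl, rfl, rfl, rfl, rfl⟩ := h <;>
      cases a <;> cases b <;> cases c <;>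
      simp only [op, down, List.map_cons, List.map_nil, List.sum_cons, List.sum_nil,
        List.cons_append, List.nil_append, mul_zero, add_zero, zpow_zero, zpow_one,
        zpow_neg_one, one_mul, h2, h3, mul_assoc, add_comm]

lemma redAt_append (k : ℕ) (M W X : List (Bool × St)) (κ : Kind)
    (h : redAt k W = some (κ, X)) : redAt (k + M.length) (M ++ W) = some (κ, M ++ X) := by
  induction M with
  | nil => exact h
  | cons m M ih =>
    show (redAt (k + M.length) (M ++ W)).map _ = _
    rw [ih]; rfl

lemma redAt_append_right (k : ℕ) (W B X : List (Bool × St)) (κ : Kind)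
    (h : redAt k W = some (κ, X)) : redAt k (W ++ B) = some (κ, X ++ B) := by
  induction k generalizing W X with
  | zero =>
    rcases W with _ | ⟨x, _ | ⟨y, W⟩⟩
    · simp [redAt] at h
    · simp [redAt] at h
    · simp only [redAt, Option.map_eq_some_iff, Prod.mk.injEq, List.cons_append] at h ⊢
      obtain ⟨p, hp, h1, rfl⟩ := h
      exact ⟨p, hp, h1, by simp⟩
  | succ k ih =>
    rcases W with _ | ⟨x, W⟩
    · simp [redAt] at h
    · simp only [redAt, Option.map_eq_some_iff, Prod.mk.injEq, List.cons_append] at h ⊢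
      obtain ⟨p, hp, h1, rfl⟩ := h
      exact ⟨(p.1, p.2 ++ B), ih W p.2 (by rw [hp, ← h1]) |>.trans (by rw [← h1]), h1, rfl⟩

/-- The diamond property, together with the equality of the two composite linear maps. -/
lemma diamond (i j : ℕ) (hij : i < j) (W W₁ W₂ : List (Bool × St)) (κ₁ κ₂ : Kind)
    (h₁ : redAt i W = some (κ₁, W₁)) (h₂ : redAt j W = some (κ₂, W₂)) :
    ∃ (i' j' : ℕ) (κ₁' κ₂' : Kind) (Z : List (Bool × St)),
      redAt j' W₁ = some (κ₁', Z) ∧ redAt i' W₂ = some (κ₂', Z) ∧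
      ∀ f, op κ₁ i (op κ₁' j' f) = op κ₂ j (op κ₂' i' f) := by
  induction i generalizing j W W₁ W₂ with
  | zero =>
    rcases W with _ | ⟨x, _ | ⟨y, B⟩⟩
    · simp [redAt] at h₁
    · simp [redAt] at h₁
    simp only [redAt, Option.map_eq_some_iff, Prod.mk.injEq] at h₁
    obtain ⟨p, hp, rfl, rfl⟩ := h₁
    rcases j with _ | _ | j
    · omega
    · -- the two rules share the letter `y`
      rcases B with _ | ⟨z, B⟩
      · simp [redAt] at h₂
      simp only [redAt, Option.map_eq_some_iff, Prod.mk.injEq] at h₂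
      obtain ⟨_, ⟨q, hq, rfl⟩, rfl, rfl⟩ := h₂
      obtain ⟨p', hp', q', hq', hZ, hc⟩ := red_overlap x y z p q hp hq
      refine ⟨0, p.2.length - 1, p'.1, q'.1, p'.2 ++ B, ?_, ?_, fun f => op_crit hc f⟩
      · simpa using redAt_append_right _ _ B _ _ hp'
      · rw [hZ]
        simpa using redAt_append_right _ _ B _ _ hq'
    · -- the two rules act on disjoint pairs
      simp only [redAt, Option.map_eq_some_iff, Prod.mk.injEq] at h₂
      obtain ⟨_, ⟨q, hq, rfl⟩, rfl, rfl⟩ := h₂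
      refine ⟨0, j + p.2.length, q.1, p.1, p.2 ++ q.2, redAt_append _ _ _ _ _ hq, ?_, fun f => ?_⟩
      · simp [redAt, hp]
      · rw [red_length x y p hp]
        exact op_far _ _ _ _
  | succ i ih =>
    rcases j with _ | j
    · omega
    rcases W with _ | ⟨x, W⟩
    · simp [redAt] at h₁
    simp only [redAt, Option.map_eq_some_iff, Prod.mk.injEq] at h₁ h₂
    obtain ⟨p, hp, rfl, rfl⟩ := h₁
    obtain ⟨q, hq, rfl, rfl⟩ := h₂
    obtain ⟨i', j', κ₁', κ₂', Z, hZ₁, hZ₂, hf⟩ := ih j (by omega) W p.2 q.2 hp hq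
    refine ⟨i' + 1, j' + 1, κ₁', κ₂', x :: Z, ?_, ?_, fun f => ?_⟩
    · simp [redAt, hZ₁]
    · simp [redAt, hZ₂]
    · funext L
      rcases L with _ | ⟨a, L⟩
      · rfl
      · exact congrFun (hf fun T => f (a :: T)) L

/-- A word that can be reduced to the empty word with tensor `f` can be so reduced starting with any
applicable rule. -/
lemma Run.first {W : List (Bool × St)} {f : List St → K} (r : Run W f) :
    ∀ (k : ℕ) (κ : Kind) (X : List (Bool × St)), redAt k W = some (κ, X) →
      ∃ g, Run X g ∧ f = op κ k g := by
  induction r with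
  | nil => intro k κ X h; cases k <;> simp [redAt] at h
  | step k₁ κ₁ W X₁ f₁ h₁ r ih =>
    intro k κ X h
    rcases lt_trichotomy k₁ k with hk | rfl | hk
    · obtain ⟨i', j', κ₁', κ₂', Z, hZ₁, hZ₂, hf⟩ := diamond k₁ k hk W X₁ X κ₁ κ h₁ h
      obtain ⟨g, hg, rfl⟩ := ih _ _ _ hZ₁
      exact ⟨_, Run.step _ _ _ _ _ hZ₂ hg, hf g⟩
    · rw [h₁] at h
      obtain ⟨rfl, rfl⟩ : κ₁ = κ ∧ X₁ = X := by simpa using h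
      exact ⟨f₁, r, rfl⟩
    · obtain ⟨i', j', κ₁', κ₂', Z, hZ₁, hZ₂, hf⟩ := diamond k k₁ hk W X X₁ κ κ₁ h h₁
      obtain ⟨g, hg, rfl⟩ := ih _ _ _ hZ₂
      exact ⟨_, Run.step _ _ _ _ _ hZ₁ hg, (hf g).symm⟩

/-- The web tensor does not depend on the execution. -/
lemma Run.unique {W : List (Bool × St)} {f g : List St → K} (r : Run W f) (r' : Run W g) :
    f = g := by
  induction r' generalizing f with
  | nil =>
    cases r with
    | nil => rfl
    | step k κ _ X f h r => cases k <;> simp [redAt] at h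
  | step k κ W X g h _ ih =>
    obtain ⟨g', hg', rfl⟩ := r.first k κ X h
    rw [ih hg']

/-! ### Comparison with `Exec` and `web` -/

lemma op_eq_match (κ : Kind) (k : ℕ) (f : List St → K) (L : List St) :
    op κ k f L = match L.drop k with
      | a :: b :: R => ((down κ a b).map fun t => v ^ t.1 * f (L.take k ++ (t.2 ++ R))).sum
      | _ => 0 := by
  induction k generalizing f L with
  | zero => rcases L with _ | ⟨a, _ | ⟨b, R⟩⟩ <;> rfl
  | succ k ih =>
    rcases L with _ | ⟨a, L⟩
    · rfl
    · exact ih _ _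

lemma redAt_length (A B : List (Bool × St)) (x y : Bool × St) :
    redAt A.length (A ++ x :: y :: B) = (red x y).map fun p => (p.1, A ++ (p.2 ++ B)) := by
  induction A with
  | nil => rfl
  | cons a A ih =>
    show (redAt A.length (A ++ x :: y :: B)).map _ = _
    rw [ih]
    cases red x y <;> rfl

lemma redAt_split (k : ℕ) (W X : List (Bool × St)) (κ : Kind) (h : redAt k W = some (κ, X)) :
    ∃ A x y B M, W = A ++ x :: y :: B ∧ red x y = some (κ, M) ∧ X = A ++ (M ++ B) := by
  induction k generalizing W X with
  | zero =>
    rcases W with _ | ⟨x, _ | ⟨y, B⟩⟩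
    · simp [redAt] at h
    · simp [redAt] at h
    · simp only [redAt, Option.map_eq_some_iff, Prod.mk.injEq] at h
      obtain ⟨p, hp, rfl, rfl⟩ := h
      exact ⟨[], x, y, B, p.2, rfl, hp, rfl⟩
  | succ k ih =>
    rcases W with _ | ⟨w, W⟩
    · simp [redAt] at h
    · simp only [redAt, Option.map_eq_some_iff, Prod.mk.injEq] at h
      obtain ⟨p, hp, rfl, rfl⟩ := h
      obtain ⟨A, x, y, B, M, rfl, hr, hX⟩ := ih W p.2 hp
      exact ⟨w :: A, x, y, B, M, rfl, hr, by rw [hX]; rfl⟩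

lemma sum_St (g : St → K) : ∑ c : St, g c = g .pos + g .zero + g .neg := by
  have : (Finset.univ : Finset St) = {.pos, .zero, .neg} := by decide
  rw [this, Finset.sum_insert (by decide), Finset.sum_insert (by decide), Finset.sum_singleton,
    add_assoc]

/-- Every execution yields a `Run` of the zipped word with the same tensor. -/
lemma exec_run {S : List Bool} {J : List St} (e : Exec S J) : Run (S.zip J) (web e) := by
  have hv := v_ne_zero
  induction e with
  | nil => exact Run.nil
  | hstep A B P Q s1 s2 j1 j2 j1' j2' hl hs hp e ih =>
    rw [List.zip_append hl] at ih ⊢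
    simp only [List.zip_cons_cons] at ih ⊢
    have hr : red (s1, j1) (s2, j2) = some (.H, [(!s1, j1'), (!s2, j2')]) := by
      cases hp <;> cases s1 <;> cases s2 <;> first | rfl | exact absurd rfl hs
    have hR := redAt_length (A.zip P) (B.zip Q) (s1, j1) (s2, j2)
    rw [hr] at hR
    convert Run.step _ _ _ _ _ hR ih using 1
    funext L
    rw [op_eq_match, web]
    simp only [List.length_zip, hl, min_self]
    rcases L.drop P.length with _ | ⟨a, _ | ⟨b, R⟩⟩
    · rfl
    · rfl
    · cases s1 <;> cases a <;> cases b <;>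
        simp [sum_St, HCpm, HCmp, tYpp, tLpp, down, hv]
  | ustep A B P Q s1 s2 hl hs e ih =>
    rw [List.zip_append hl] at ih ⊢
    simp only [List.zip_cons_cons]
    have hr : red (s1, .pos) (s2, .neg) = some (.U, []) := by
      cases s1 <;> cases s2 <;> first | rfl | exact absurd rfl hs
    have hR := redAt_length (A.zip P) (B.zip Q) (s1, .pos) (s2, .neg)
    rw [hr] at hR
    convert Run.step _ _ _ _ _ hR ih using 1
    funext L
    rw [op_eq_match, web]
    simp only [List.length_zip, hl, min_self]
    rcases L.drop P.length with _ | ⟨a, _ | ⟨b, R⟩⟩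
    · rfl
    · rfl
    · cases s1 <;> cases a <;> cases b <;> simp [bCpm, bCmp, down, zpow_neg]
  | ystep A B P Q s j1 j2 j' hl hp e ih =>
    rw [List.zip_append hl] at ih ⊢
    simp only [List.zip_cons_cons] at ih ⊢
    have hr : red (s, j1) (s, j2) = some (.Y, [(!s, j')]) := by
      cases hp <;> cases s <;> rfl
    have hR := redAt_length (A.zip P) (B.zip Q) (s, j1) (s, j2)
    rw [hr] at hR
    convert Run.step _ _ _ _ _ hR ih using 1
    funext L
    rw [op_eq_match, web]
    simp only [List.length_zip, hl, min_self]
    rcases L.drop P.length with _ | ⟨a, _ | ⟨b, R⟩⟩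
    · rfl
    · rfl
    · cases s <;> cases a <;> cases b <;> simp [sum_St, tYpp, tYmm, down]

/-- The rules recorded by `red` are the growth rules of `Exec`. -/
lemma red_exec {A B M : List (Bool × St)} {x y : Bool × St} {κ : Kind}
    (h : red x y = some (κ, M))
    (e : Nonempty (Exec ((A ++ (M ++ B)).map Prod.fst) ((A ++ (M ++ B)).map Prod.snd))) :
    Nonempty (Exec ((A ++ x :: y :: B).map Prod.fst) ((A ++ x :: y :: B).map Prod.snd)) := by
  have hl : (A.map Prod.fst).length = (A.map Prod.snd).length := by simp
  obtain ⟨s, a⟩ := x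
  obtain ⟨t, b⟩ := y
  simp only [List.map_append, List.map_cons] at e ⊢
  obtain ⟨e⟩ := e
  cases s <;> cases t <;> cases a <;> cases b <;>
    simp only [red, Option.some.injEq, Prod.mk.injEq, reduceCtorEq] at h <;>
    obtain ⟨-, rfl⟩ := h <;>
    first
    | exact ⟨Exec.ustep _ _ _ _ _ _ hl (by decide) e⟩
    | exact ⟨Exec.ystep _ _ _ _ _ _ _ _ hl .y1 e⟩
    | exact ⟨Exec.ystep _ _ _ _ _ _ _ _ hl .y2 e⟩
    | exact ⟨Exec.ystep _ _ _ _ _ _ _ _ hl .y3 e⟩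
    | exact ⟨Exec.hstep _ _ _ _ _ _ _ _ _ _ hl (by decide) .h1 e⟩
    | exact ⟨Exec.hstep _ _ _ _ _ _ _ _ _ _ hl (by decide) .h2 e⟩
    | exact ⟨Exec.hstep _ _ _ _ _ _ _ _ _ _ hl (by decide) .h3 e⟩

lemma Run.exec {W : List (Bool × St)} {f : List St → K} (r : Run W f) :
    Nonempty (Exec (W.map Prod.fst) (W.map Prod.snd)) := by
  induction r with
  | nil => exact ⟨Exec.nil⟩
  | step k κ W X f h r ih =>
    obtain ⟨A, x, y, B, M, rfl, hr, rfl⟩ := redAt_split k W X κ h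
    exact red_exec hr ih

/-! ### Computing an execution and its leading terms -/

/-- The leftmost applicable rule whose kind satisfies `p`: its position, kind and result. -/
def find (p : Kind → Bool) : List (Bool × St) → Option (ℕ × Kind × List (Bool × St))
  | x :: y :: B =>
    match red x y with
    | some (κ, M) =>
      if p κ then some (0, κ, M ++ B)
      else (find p (y :: B)).map fun q => (q.1 + 1, q.2.1, x :: q.2.2)
    | none => (find p (y :: B)).map fun q => (q.1 + 1, q.2.1, x :: q.2.2)
  | _ => none

/-- The sequence of rules (position and kind) of a complete execution that applies an H-rule only when
no other rule applies; the first argument bounds the number of steps. -/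
def script : ℕ → List (Bool × St) → Option (List (ℕ × Kind))
  | _, [] => some []
  | 0, _ => none
  | n + 1, W =>
    match find (fun κ => κ != .H) W with
    | some (k, κ, X) => (script n X).map ((k, κ) :: ·)
    | none =>
      match find (fun _ => true) W with
      | some (k, κ, X) => (script n X).map ((k, κ) :: ·)
      | none => none

/-- The tensor of a sequence of rules. -/
def ev : List (ℕ × Kind) → List St → K
  | [] => unitTensor
  | (k, κ) :: sc => op κ k (ev sc)

/-- The analogue of `op` for tensors whose coordinates are sums of powers of `v`, recorded as lists of
exponents. -/
def flOp (κ : Kind) : ℕ → (List St → List ℤ) → List St → List ℤ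
  | 0, f, a :: b :: R => (down κ a b).flatMap fun t => (f (t.2 ++ R)).map (t.1 + ·)
  | k + 1, f, x :: L => flOp κ k (fun T => f (x :: T)) L
  | _, _, _ => []

/-- The exponents of the monomials in the coordinates of `ev`. -/
def fl : List (ℕ × Kind) → List St → List ℤ
  | [], L => if L = [] then [0] else []
  | (k, κ) :: sc, L => flOp κ k (fl sc) L

/-- The largest exponent in the matrix of a rule. -/
def gain : Kind → ℕ
  | .H => 1
  | _ => 0

/-- The matrix of the map attached to a rule, read by columns: the image of a basis tensor under the
map at position `0`. The pair `(c, L)` stands for the term `v ^ (gain κ - c) e_L`, so that the costs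
`c` are natural numbers. -/
def up0 : Kind → List St → List (ℕ × List St)
  | .U, R => [(0, .pos :: .neg :: R), (1, .zero :: .zero :: R), (2, .neg :: .pos :: R)]
  | .Y, .pos :: R => [(0, .pos :: .zero :: R), (1, .zero :: .pos :: R)]
  | .Y, .zero :: R => [(0, .pos :: .neg :: R), (1, .neg :: .pos :: R)]
  | .Y, .neg :: R => [(0, .zero :: .neg :: R), (1, .neg :: .zero :: R)]
  | .H, .pos :: .pos :: R => [(1, .pos :: .pos :: R)]
  | .H, .pos :: .zero :: R => [(1, .zero :: .pos :: R)]
  | .H, .pos :: .neg :: R => [(0, .pos :: .neg :: R), (1, .zero :: .zero :: R)]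
  | .H, .zero :: .pos :: R => [(1, .pos :: .zero :: R)]
  | .H, .zero :: .zero :: R => [(1, .pos :: .neg :: R), (1, .neg :: .pos :: R)]
  | .H, .zero :: .neg :: R => [(1, .neg :: .zero :: R)]
  | .H, .neg :: .pos :: R => [(1, .zero :: .zero :: R), (2, .neg :: .pos :: R)]
  | .H, .neg :: .zero :: R => [(1, .zero :: .neg :: R)]
  | .H, .neg :: .neg :: R => [(1, .neg :: .neg :: R)]
  | _, _ => []

/-- `up0` at position `k`. -/
def up (κ : Kind) : ℕ → List St → List (ℕ × List St)
  | 0, L => up0 κ L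
  | k + 1, x :: L => (up κ k L).map fun t => (t.1, x :: t.2)
  | _, _ => []

/-- The difference `s - c` of natural numbers, if it is not negative. -/
def charge : ℕ → ℕ → Option ℕ
  | s, 0 => some s
  | 0, _ + 1 => none
  | s + 1, c + 1 => charge s c

/-- The monomials of exponent at least `-N` in the tensor of a sequence of rules: `(L, s)` stands for
`v ^ (s - N) e_L`. Since a rule raises exponents by at most `gain`, terms below the running bound
cannot contribute and are dropped. -/
def top : ℕ → List (ℕ × Kind) → List (List St × ℕ)
  | N, [] => [([], N)]
  | N, (k, κ) :: sc => (top (N + gain κ) sc).flatMap fun t =>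
      (up κ k t.1).filterMap fun u => (charge t.2 u.1).map fun s => (u.2, s)

lemma find_redAt (p : Kind → Bool) (W X : List (Bool × St)) (k : ℕ) (κ : Kind)
    (h : find p W = some (k, κ, X)) : redAt k W = some (κ, X) := by
  induction W generalizing k X with
  | nil => simp [find] at h
  | cons x W ih =>
    have key : ∀ k X, (find p W).map (fun q => (q.1 + 1, q.2.1, x :: q.2.2)) = some (k, κ, X) →
        redAt k (x :: W) = some (κ, X) := by
      intro k X h
      simp only [Option.map_eq_some_iff, Prod.mk.injEq] at h
      obtain ⟨⟨k', κ', X'⟩, hq, rfl, rfl, rfl⟩ := h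
      simp [redAt, ih _ _ hq]
    rcases W with _ | ⟨y, B⟩
    · simp [find] at h
    rw [find] at h
    split at h
    · rename_i κ' M hr
      split_ifs at h
      · simp only [Option.some.injEq, Prod.mk.injEq] at h
        obtain ⟨rfl, rfl, rfl⟩ := h
        simp [redAt, hr]
      · exact key _ _ h
    · exact key _ _ h

lemma script_run (n : ℕ) (W : List (Bool × St)) (sc : List (ℕ × Kind))
    (h : script n W = some sc) : Run W (ev sc) := by
  induction n generalizing W sc with
  | zero =>
    rcases W with _ | ⟨x, W⟩
    · simp only [script, Option.some.injEq] at h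
      subst h
      exact Run.nil
    · simp [script] at h
  | succ n ih =>
    rcases W with _ | ⟨x, W⟩
    · simp only [script, Option.some.injEq] at h
      subst h
      exact Run.nil
    have key : ∀ (p : Kind → Bool) (k : ℕ) (κ : Kind) (X : List (Bool × St)),
        find p (x :: W) = some (k, κ, X) → (script n X).map ((k, κ) :: ·) = some sc →
        Run (x :: W) (ev sc) := by
      intro p k κ X hf hs
      simp only [Option.map_eq_some_iff] at hs
      obtain ⟨sc', hs', rfl⟩ := hs
      exact Run.step _ _ _ _ _ (find_redAt _ _ _ _ _ hf) (ih _ _ hs')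
    rw [script] at h
    · split at h
      · rename_i hf
        exact key _ _ _ _ hf h
      · split at h
        · rename_i hf
          exact key _ _ _ _ hf h
        · simp at h
    · simp

lemma op_flOp (κ : Kind) (k : ℕ) (f : List St → K) (g : List St → List ℤ)
    (h : ∀ L, f L = ((g L).map (v ^ ·)).sum) (L : List St) :
    op κ k f L = ((flOp κ k g L).map (v ^ ·)).sum := by
  induction k generalizing f g L with
  | zero =>
    rcases L with _ | ⟨a, _ | ⟨b, R⟩⟩
    · rfl
    · rfl
    · simp only [op, flOp, List.map_flatMap]
      induction down κ a b with
      | nil => rfl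
      | cons t l ih =>
        rw [List.map_cons, List.sum_cons, ih, List.flatMap_cons, List.sum_append, h,
          ← List.sum_map_mul_left, List.map_map]
        simp [Function.comp_def, zpow_add₀ v_ne_zero]
  | succ k ih =>
    rcases L with _ | ⟨a, L⟩
    · rfl
    · exact ih _ _ (fun T => h _) L

lemma ev_fl (sc : List (ℕ × Kind)) (L : List St) : ev sc L = ((fl sc L).map (v ^ ·)).sum := by
  induction sc generalizing L with
  | nil => by_cases h : L = [] <;> simp [ev, fl, unitTensor, h]
  | cons s sc ih => exact op_flOp _ _ _ _ ih L

lemma down_gain (κ : Kind) (a b : St) : ∀ t ∈ down κ a b, t.1 ≤ gain κ := by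
  revert κ a b; decide

lemma down_up0 (κ : Kind) (a b : St) (R : List St) :
    ∀ t ∈ down κ a b, ((gain κ - t.1).toNat, a :: b :: R) ∈ up0 κ (t.2 ++ R) := by
  cases κ <;> cases a <;> cases b <;> simp [down, up0, gain]

lemma flOp_up (κ : Kind) (k : ℕ) (g : List St → List ℤ) (L : List St) (d : ℤ)
    (h : d ∈ flOp κ k g L) :
    ∃ (L' : List St) (d' : ℤ) (c : ℕ), d' ∈ g L' ∧ d = d' + gain κ - c ∧ (c, L) ∈ up κ k L' := by
  induction k generalizing g L with
  | zero =>
    rcases L with _ | ⟨a, _ | ⟨b, R⟩⟩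
    · simp [flOp] at h
    · simp [flOp] at h
    · simp only [flOp, List.mem_flatMap, List.mem_map] at h
      obtain ⟨t, ht, d', hd', rfl⟩ := h
      have := down_gain κ a b t ht
      exact ⟨_, d', (gain κ - t.1).toNat, hd', by omega, down_up0 κ a b R t ht⟩
  | succ k ih =>
    rcases L with _ | ⟨a, L⟩
    · simp [flOp] at h
    · obtain ⟨L', d', c, h1, h2, h3⟩ := ih _ _ h
      exact ⟨a :: L', d', c, h1, h2, List.mem_map.2 ⟨_, h3, rfl⟩⟩

lemma charge_add (s c : ℕ) : charge (s + c) c = some s := by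
  induction c with
  | zero => cases s <;> rfl
  | succ c ih => exact ih

/-- `top N` misses no monomial of exponent at least `-N`. -/
lemma fl_top (sc : List (ℕ × Kind)) (N : ℕ) (L : List St) (s : ℕ)
    (h : (s - N : ℤ) ∈ fl sc L) : (L, s) ∈ top N sc := by
  induction sc generalizing N L s with
  | nil =>
    by_cases hL : L = []
    · simp only [fl, hL, if_true, List.mem_singleton] at h
      simp only [top, hL, List.mem_singleton, Prod.mk.injEq, true_and]
      omega
    · simp [fl, hL] at h
  | cons p sc ih =>
    obtain ⟨k, κ⟩ := p
    obtain ⟨L', d', c, h1, h2, h3⟩ := flOp_up _ _ _ _ _ h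
    simp only [top, List.mem_flatMap, List.mem_filterMap]
    refine ⟨(L', s + c), ih (N + gain κ) L' (s + c) ?_, (c, L), h3, ?_⟩
    · convert h1 using 1
      push_cast
      omega
    · simp [charge_add]

/-! ### Polynomials in `v⁻¹` -/

lemma ZeroConst.zero : ZeroConst 0 := ⟨0, by simp, by simp⟩

lemma ZeroConst.add {a b : K} (ha : ZeroConst a) (hb : ZeroConst b) : ZeroConst (a + b) := by
  obtain ⟨p, hp, rfl⟩ := ha
  obtain ⟨q, hq, rfl⟩ := hb
  exact ⟨p + q, by simp [hp, hq], by simp⟩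

lemma ZeroConst.neg {a : K} (ha : ZeroConst a) : ZeroConst (-a) := by
  obtain ⟨p, hp, rfl⟩ := ha
  exact ⟨-p, by simp [hp], by simp⟩

lemma ZeroConst.zpow {d : ℤ} (hd : d < 0) : ZeroConst (v ^ d) := by
  obtain ⟨n, rfl⟩ : ∃ n : ℕ, d = -((n + 1 : ℕ) : ℤ) := ⟨(-d - 1).toNat, by omega⟩
  exact ⟨Polynomial.X ^ (n + 1), by simp, by simp [← zpow_natCast]⟩

/-- Membership in `v⁻¹ℤ[v⁻¹]` is a genuine restriction because `v⁻¹` is transcendental over `ℤ`. -/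
lemma not_zeroConst_one : ¬ ZeroConst 1 := by
  rintro ⟨p, hp, h⟩
  have ht : Transcendental ℤ (v⁻¹ : K) := by
    rw [v, Transcendental, IsAlgebraic.inv_iff]
    rintro ⟨q, hq, h0⟩
    refine hq ((Polynomial.map_eq_zero_iff (Int.castRingHom ℚ).injective_int).1 ?_)
    apply RatFunc.algebraMap_injective ℚ
    rw [map_zero, Polynomial.map, Polynomial.hom_eval₂, RatFunc.algebraMap_X]
    -- ring homomorphisms out of `ℤ` are unique
    exact (congrArg (fun f : ℤ →+* K => Polynomial.eval₂ f RatFunc.X q)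
      (RingHom.ext_int _ _)).trans h0
  have h1 : p - 1 = 0 := by
    refine (transcendental_iff.1 ht) _ ?_
    rw [map_sub, ← h, map_one, sub_self]
  rw [sub_eq_zero.1 h1] at hp
  simp at hp

lemma zeroConst_sum (l : List ℤ) (h : ∀ d ∈ l, d < 0) : ZeroConst ((l.map (v ^ ·)).sum) := by
  induction l with
  | nil => exact ZeroConst.zero
  | cons d l ih =>
    rw [List.map_cons, List.sum_cons]
    exact (ZeroConst.zpow (h d (by simp))).add (ih fun e he => h e (by simp [he]))

lemma not_zeroConst_sum (l₁ l₂ : List ℤ) (h₁ : ∀ d ∈ l₁, d < 0) (h₂ : ∀ d ∈ l₂, d < 0) :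
    ¬ ZeroConst (((l₁ ++ 0 :: l₂).map (v ^ ·)).sum) := by
  intro h
  apply not_zeroConst_one
  have := (h.add (zeroConst_sum l₁ h₁).neg).add (zeroConst_sum l₂ h₂).neg
  simpa using this

/-! ### Dominant state strings -/

/-- The letter `(s, j)` as a step of the lattice path in the dominant chamber; `none` if the step leaves
the chamber. -/
def move : Bool → St → ℕ → ℕ → Option (ℕ × ℕ)
  | true, .pos, x, y => some (x + 1, y)
  | true, .zero, x + 1, y => some (x, y + 1)
  | true, .neg, x, y + 1 => some (x, y)
  | false, .pos, x, y => some (x, y + 1)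
  | false, .zero, x, y + 1 => some (x + 1, y)
  | false, .neg, x + 1, y => some (x, y)
  | _, _, _, _ => none

/-- The state strings whose lattice path, started at `(x, y)`, stays dominant and ends at `(0, 0)`.
Since a step lowers `x + y` by at most `1`, branches with `x + y` above the number of remaining
letters are cut off. -/
def dom : List Bool → ℕ → ℕ → List (List St)
  | [], 0, 0 => [[]]
  | [], _, _ => []
  | s :: S, x, y => [St.pos, St.zero, St.neg].flatMap fun j =>
      match move s j x y with
      | some (x', y') => if x' + y' ≤ S.length then (dom S x' y').map (j :: ·) else []
      | none => []

lemma wtSum_cons (s : Bool) (S : List Bool) (j : St) (J : List St) :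
    wtSum (s :: S) (j :: J) = wt s j + wtSum S J := by
  simp [wtSum]

lemma move_eq_some {s : Bool} {j : St} {x y x' y' : ℕ} :
    move s j x y = some (x', y') ↔ (x' : ℤ) = x + (wt s j).1 ∧ (y' : ℤ) = y + (wt s j).2 := by
  cases s <;> cases j <;> rcases x with _ | x <;> rcases y with _ | y <;>
    simp only [move, wt, Option.some.injEq, Prod.mk.injEq, reduceCtorEq, false_iff] <;> omega

/-- The path started at `(x, y)` with letters `(S, J)` stays in the dominant chamber and ends at the
origin. -/
def DomFrom (S : List Bool) (x y : ℕ) (J : List St) : Prop :=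
  J.length = S.length ∧
    (∀ k : ℕ, 0 ≤ x + (wtSum (S.take k) (J.take k)).1 ∧
      0 ≤ y + (wtSum (S.take k) (J.take k)).2) ∧
    x + (wtSum S J).1 = 0 ∧ y + (wtSum S J).2 = 0

lemma domFrom_nil (x y : ℕ) (J : List St) : DomFrom [] x y J ↔ J = [] ∧ x = 0 ∧ y = 0 := by
  rw [DomFrom, List.length_nil, List.length_eq_zero_iff]
  constructor
  · rintro ⟨rfl, -, h1, h2⟩
    simp only [wtSum, List.zip_nil_right, List.map_nil, List.sum_nil, Prod.fst_zero,
      Prod.snd_zero] at h1 h2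
    exact ⟨rfl, by omega, by omega⟩
  · rintro ⟨rfl, rfl, rfl⟩
    simp [wtSum]

lemma domFrom_cons (s : Bool) (S : List Bool) (x y : ℕ) (j : St) (J : List St) :
    DomFrom (s :: S) x y (j :: J) ↔
      ∃ x' y', move s j x y = some (x', y') ∧ DomFrom S x' y' J := by
  simp only [move_eq_some]
  constructor
  · rintro ⟨h1, h2, h3, h4⟩
    have h2' : ∀ k, 0 ≤ x + (wt s j).1 + (wtSum (S.take k) (J.take k)).1 ∧
        0 ≤ y + (wt s j).2 + (wtSum (S.take k) (J.take k)).2 := by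
      intro k
      have := h2 (k + 1)
      simp only [List.take_succ_cons, wtSum_cons, Prod.fst_add, Prod.snd_add] at this
      omega
    have hc : 0 ≤ x + (wt s j).1 ∧ 0 ≤ y + (wt s j).2 := by simpa [wtSum] using h2' 0
    obtain ⟨x', hx'⟩ := Int.eq_ofNat_of_zero_le hc.1
    obtain ⟨y', hy'⟩ := Int.eq_ofNat_of_zero_le hc.2
    rw [wtSum_cons, Prod.fst_add] at h3
    rw [wtSum_cons, Prod.snd_add] at h4
    refine ⟨x', y', ⟨hx'.symm, hy'.symm⟩, by simpa using h1, fun k => ?_, by omega, by omega⟩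
    rw [← hx', ← hy']
    exact h2' k
  · rintro ⟨x', y', ⟨hx', hy'⟩, h1, h2, h3, h4⟩
    refine ⟨by simp [h1], fun k => ?_, ?_, ?_⟩
    · rcases k with _ | k
      · simp [wtSum]
      · have := h2 k
        simp only [List.take_succ_cons, wtSum_cons, Prod.fst_add, Prod.snd_add]
        omega
    · rw [wtSum_cons, Prod.fst_add]; omega
    · rw [wtSum_cons, Prod.snd_add]; omega

lemma domFrom_le {S : List Bool} {x y : ℕ} {J : List St} (h : DomFrom S x y J) :
    x + y ≤ S.length := by
  induction S generalizing x y J with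
  | nil => obtain ⟨-, rfl, rfl⟩ := (domFrom_nil x y J).1 h; rfl
  | cons s S ih =>
    rcases J with _ | ⟨j, J⟩
    · simp [DomFrom] at h
    obtain ⟨x', y', hm, h'⟩ := (domFrom_cons s S x y j J).1 h
    have h1 := ih h'
    rw [move_eq_some] at hm
    have h2 : -1 ≤ (wt s j).1 + (wt s j).2 := by cases s <;> cases j <;> decide
    rw [List.length_cons]
    omega

lemma mem_dom (S : List Bool) (x y : ℕ) (J : List St) : J ∈ dom S x y ↔ DomFrom S x y J := by
  induction S generalizing x y J with
  | nil =>
    rw [domFrom_nil]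
    rcases x with _ | x <;> rcases y with _ | y <;> simp [dom]
  | cons s S ih =>
    rcases J with _ | ⟨j, J⟩
    · simp only [dom, List.mem_flatMap, DomFrom, List.length_nil, List.length_cons]
      constructor
      · rintro ⟨i, -, hi⟩
        split at hi
        · split_ifs at hi <;> simp at hi
        · simp at hi
      · rintro ⟨h, -⟩
        omega
    rw [domFrom_cons, dom, List.mem_flatMap]
    constructor
    · rintro ⟨i, -, hi⟩
      split at hi
      · rename_i x' y' hm
        split_ifs at hi
        · obtain ⟨J', hJ', he⟩ := List.mem_map.1 hi
          obtain ⟨rfl, rfl⟩ := List.cons.inj he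
          exact ⟨x', y', hm, (ih _ _ _).1 hJ'⟩
        · simp at hi
      · simp at hi
    · rintro ⟨x', y', hm, hJ⟩
      refine ⟨j, by cases j <;> simp, ?_⟩
      simp only [hm]
      rw [if_pos (domFrom_le hJ)]
      exact List.mem_map.2 ⟨J, (ih _ _ _).2 hJ, rfl⟩

lemma dominant_iff (S : List Bool) (J : List St) : Dominant S J ↔ J ∈ dom S 0 0 := by
  rw [mem_dom, DomFrom, Dominant]
  simp [Prod.ext_iff]

/-! ### The finite verification -/

/-- The check, for one dominant state string `J`, that the tensor of the computed execution has the
negative-exponent property: its coordinate at `J` is the single monomial `v ^ 0`, and there is no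
monomial of nonnegative exponent elsewhere. -/
def good (S : List Bool) (J : List St) : Bool :=
  match script 40 (S.zip J) with
  | some sc => (fl sc J == [0]) && (top 0 sc).all fun t => t.1 == J
  | none => false

/-- The check that the coordinate at `L` of the tensor for `J` has constant term `1`, all other
monomials having negative exponents. -/
def bad (S : List Bool) (J L : List St) : Bool :=
  match script 40 (S.zip J) with
  | some sc => (fl sc L).filter (0 ≤ ·) == [0]
  | none => false

lemma good_negExp (S : List Bool) (J : List St) (h : good S J = true) (e : Exec S J) :
    NegExpProp S.length (web e) J := by
  rw [good] at h
  split at h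
  · rename_i sc hsc
    rw [(exec_run e).unique (script_run _ _ _ hsc)]
    simp only [Bool.and_eq_true, beq_iff_eq, List.all_eq_true] at h
    refine ⟨by rw [ev_fl, h.1]; simp, fun J' _ hne => ?_⟩
    rw [ev_fl]
    refine zeroConst_sum _ fun d hd => ?_
    by_contra hd0
    obtain ⟨s, rfl⟩ := Int.eq_ofNat_of_zero_le (not_lt.1 hd0)
    exact hne (h.2 _ (fl_top sc 0 J' s (by simpa using hd)))
  · simp at h

lemma bad_not_negExp (S : List Bool) (J L : List St) (h : bad S J L = true)
    (hL : L.length = S.length) (hne : L ≠ J) (hJ : J.length = S.length) :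
    ∃ e : Exec S J, ¬ NegExpProp S.length (web e) J := by
  rw [bad] at h
  split at h
  · rename_i sc hsc
    have r := script_run _ _ _ hsc
    obtain ⟨e⟩ := r.exec
    rw [List.map_fst_zip hJ.ge, List.map_snd_zip hJ.le] at e
    refine ⟨e, fun hn => ?_⟩
    have hz := hn.2 L hL hne
    rw [(exec_run e).unique r, ev_fl] at hz
    rw [beq_iff_eq, List.filter_eq_cons_iff] at h
    obtain ⟨l₁, l₂, hl, h₁, -, h₂⟩ := h
    rw [List.filter_eq_nil_iff] at h₂
    rw [hl] at hz
    exact not_zeroConst_sum l₁ l₂ (fun d hd => by simpa using h₁ d hd)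
      (fun d hd => by simpa using h₂ d hd) hz
  · simp at h

/-- The criterion for a sign string `S` to have `J` as its only failing dominant state string, the
failure being visible at `L`. -/
def verify (S : List Bool) (J L : List St) : Bool :=
  ((dom S 0 0).all fun J' => J' == J || good S J') && ((dom S 0 0).contains J && bad S J L) &&
    (L.length == S.length && L != J)

lemma verify_sound (S : List Bool) (J L : List St) (h : verify S J L = true) :
    ∃! J : List St, Dominant S J ∧ ∃ e : Exec S J, ¬ NegExpProp S.length (web e) J := by
  simp only [verify, Bool.and_eq_true, List.all_eq_true, Bool.or_eq_true, beq_iff_eq,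
    List.contains_iff_mem, bne_iff_ne] at h
  obtain ⟨⟨hall, hdom, hbad⟩, hlen, hne⟩ := h
  have hD := (dominant_iff S J).2 hdom
  refine ⟨J, ⟨hD, bad_not_negExp S J L hbad hlen hne hD.1⟩, ?_⟩
  rintro J' ⟨hD', e, he⟩
  rcases hall J' ((dominant_iff S J').1 hD') with h | h
  · exact h
  · exact absurd (good_negExp S J' h e) he

/-- The failing state string when the sign string starts with two equal signs. -/
def jEven : List St :=
  [.pos, .pos, .pos, .pos, .zero, .zero, .zero, .zero, .neg, .neg, .neg, .neg]

/-- A second basis tensor whose coefficient in the web tensor of `jEven` has constant term `1`. -/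
def lEven : List St :=
  [.pos, .pos, .neg, .pos, .neg, .pos, .neg, .pos, .neg, .pos, .neg, .neg]

/-- The failing state string when the sign string starts with two different signs. -/
def jOdd : List St :=
  [.pos, .pos, .pos, .zero, .pos, .zero, .zero, .neg, .zero, .neg, .neg, .neg]

/-- A second basis tensor whose coefficient in the web tensor of `jOdd` has constant term `1`. -/
def lOdd : List St :=
  [.pos, .neg, .pos, .neg, .pos, .neg, .pos, .neg, .pos, .neg, .pos, .neg]

lemma verify_zero : verify (base.rotate 0) jEven lEven = true := by decide +kernel

lemma verify_one : verify (base.rotate 1) jOdd lOdd = true := by decide +kernel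

lemma verify_two : verify (base.rotate 2) jEven lEven = true := by decide +kernel

lemma verify_three : verify (base.rotate 3) jOdd lOdd = true := by decide +kernel

lemma base_rotate_mod (r : ℕ) : base.rotate r = base.rotate (r % 4) := by
  have h : ∀ i < 12, base.rotate i = base.rotate (i % 4) := by decide
  have h12 : base.length = 12 := rfl
  rw [← List.rotate_mod, h12, h _ (Nat.mod_lt _ (by decide))]
  congr 1
  exact Nat.mod_mod_of_dvd r (by decide)

/-- for each of the four cyclic rotations `S` of
`(+,+,−,−,+,+,−,−,+,+,−,−)` there is exactly one dominant state string `J`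
whose web tensor fails the negative-exponent property; every other dominant
state string has it. -/
theorem web_negExp_unique_failure :
    ∀ S : List Bool, (∃ r : ℕ, S = base.rotate r) →
    ∃! J : List St, Dominant S J ∧
      ∃ e : Exec S J, ¬ NegExpProp S.length (web e) J := by
  rintro S ⟨r, rfl⟩
  rw [base_rotate_mod]
  have hr : r % 4 < 4 := Nat.mod_lt _ (by decide)
  interval_cases r % 4
  · exact verify_sound _ _ _ verify_zero
  · exact verify_sound _ _ _ verify_one
  · exact verify_sound _ _ _ verify_two
  · exact verify_sound _ _ _ verify_three

end
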